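/- Let p be a prime, n ≥ 1 and m ≥ 2 integers, set m̄ = m/2 if m is even and m̄ = (m+1)/2 if m is odd, and let ψ be an additive character of ℚ_p of conductor m. Let f ∈ ℤ_p[x₁,…,xₙ] and let x₀ ∈ ℤ_pⁿ be a point such that min_{1≤i≤n} v_p((∂ᵢf)(x₀)) < (m−1)/2 (equivalently, v_p((∂ᵢf)(x₀)·(∂ⱼf)(x₀)) < m−1 for some i, j). Then ∫_{x₀ + (p^{m̄} ℤ_p)ⁿ} ψ(f(x)) dx = 0. -/

import Mathlib

/-!
On the ball `B = x₀ + (p^m̄ ℤ_p)ⁿ`, translate by `h = t eᵢ` with `p^m̄ ∣ t`. Since `2 m̄ ≥ m`, Taylor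
expansion gives `f (x + h) ≡ f x + t ∂ᵢf(x₀) mod p^m` for all `x ∈ B`, so the integrand is multiplied
by the constant `c = ψ (t ∂ᵢf(x₀))`, while translation invariance preserves the integral; hence
`I = c I`. The condition `2 v(∂ᵢf(x₀)) < m - 1` means `v(∂ᵢf(x₀)) + m̄ ≤ m - 1`, so `t ∂ᵢf(x₀)` can be
made equal to any element of `p^(m-1) ℤ_p`, in particular to one where `ψ` is not `1`. So `I = 0`.
-/

open MeasureTheory MvPolynomial

/-- First-order Taylor expansion in the `i`-th coordinate, with remainder divisible by `t ^ 2`. -/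
lemma eval_add_single {R : Type*} [CommRing R] {n : ℕ} (f : MvPolynomial (Fin n) R)
    (i : Fin n) (x : Fin n → R) (t : R) :
    t ^ 2 ∣ eval (x + Pi.single i t) f - (eval x f + t * eval x (pderiv i f)) := by
  induction f using MvPolynomial.induction_on with
  | C a => simp
  | add p q hp hq =>
    have := dvd_add hp hq
    simp only [map_add]
    convert this using 1
    ring
  | mul_X p j hp =>
    obtain ⟨c, hc⟩ := hp
    have hc' := sub_eq_iff_eq_add.mp hc
    rw [Derivation.leibniz, map_mul, hc', pderiv_X]
    by_cases hj : j = i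
    · subst hj
      simp only [smul_eq_mul, eval_X, map_mul, map_add, Pi.add_apply, Pi.single_eq_same, map_one]
      exact ⟨c * (x j + t) + eval x (pderiv j p), by ring⟩
    · simp only [smul_eq_mul, eval_X, map_mul, map_add, Pi.add_apply, Pi.single_eq_of_ne hj, map_zero]
      exact ⟨c * x j, by ring⟩

lemma dvd_eval_sub_eval {R : Type*} [CommRing R] {n : ℕ} (f : MvPolynomial (Fin n) R)
    (x y : Fin n → R) (d : R) (h : ∀ i, d ∣ x i - y i) : d ∣ eval x f - eval y f := by
  induction f using MvPolynomial.induction_on with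
  | C a => simp
  | add p q hp hq =>
    have := dvd_add hp hq
    simp only [map_add]
    convert this using 1
    ring
  | mul_X p j hp =>
    have := dvd_add (hp.mul_right (x j)) ((h j).mul_left (eval y p))
    simp only [map_mul, eval_X]
    convert this using 1
    ring

/-- For `x` congruent to `x₀` modulo `d`, translating by a multiple of `d` along the `i`-th axis
changes `f x` modulo `d²` by a quantity that does not depend on `x`. -/
lemma dvd_sq_eval_add_single {R : Type*} [CommRing R] {n : ℕ} (f : MvPolynomial (Fin n) R)
    (i : Fin n) (x x₀ : Fin n → R) (t d : R) (h : ∀ i, d ∣ x i - x₀ i) (ht : d ∣ t) :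
    d ^ 2 ∣ eval (x + Pi.single i t) f - (eval x f + t * eval x₀ (pderiv i f)) := by
  have h1 := (pow_dvd_pow_of_dvd ht 2).trans (eval_add_single f i x t)
  have h2 := mul_dvd_mul ht (dvd_eval_sub_eval (pderiv i f) x x₀ d h)
  rw [← sq] at h2
  convert dvd_add h1 h2 using 1
  ring

/-- Let `p` be a prime, `n ≥ 1` and `m ≥ 2` integers, set `m̄ = m/2` if `m` is even
and `m̄ = (m+1)/2` if `m` is odd, and let `ψ` be an additive character of `ℚ_p` of conductor `m`.
Let `f ∈ ℤ_p[x₁,…,xₙ]` and `x₀ ∈ ℤ_pⁿ` with `min_i v_p((∂ᵢf)(x₀)) < (m-1)/2`, expressed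
equivalently via norms as `‖(∂ᵢf)(x₀)‖² > p^{-(m-1)}` for some `i`.  Then
`∫_{x₀ + (p^m̄ ℤ_p)ⁿ} ψ(f(x)) dx = 0`, with the Haar measure on `ℤ_pⁿ` normalized so that
`ℤ_pⁿ` has measure `1`. -/
theorem stmt_2 {p : ℕ} [Fact p.Prime] (n m mbar : ℕ) (hn : 1 ≤ n) (hm : 2 ≤ m)
    (hmbar : mbar = if Even m then m / 2 else (m + 1) / 2)
    (ψ : ℚ_[p] → ℂ) (hψ_cont : Continuous ψ)
    (hψ_add : ∀ a b : ℚ_[p], ψ (a + b) = ψ a * ψ b)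
    (hψ_norm : ∀ a : ℚ_[p], ‖ψ a‖ = 1)
    (hψ_triv : ∀ z : ℚ_[p], ‖z‖ ≤ (p : ℝ) ^ (-(m : ℤ)) → ψ z = 1)
    (hψ_nontriv : ∃ z : ℚ_[p], ‖z‖ ≤ (p : ℝ) ^ (-((m : ℤ) - 1)) ∧ ψ z ≠ 1)
    (f : MvPolynomial (Fin n) ℤ_[p]) (x₀ : Fin n → ℤ_[p])
    (hx₀ : ∃ i : Fin n, (p : ℝ) ^ (-((m : ℤ) - 1)) < ‖eval x₀ (pderiv i f)‖ ^ 2)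
    [MeasurableSpace ℤ_[p]] [BorelSpace ℤ_[p]]
    (μ : Measure (Fin n → ℤ_[p])) [μ.IsAddHaarMeasure] (hμ : μ Set.univ = 1) :
    (∫ x in {x : Fin n → ℤ_[p] | ∀ i, ‖x i - x₀ i‖ ≤ (p : ℝ) ^ (-(mbar : ℤ))},
      ψ ((eval x f : ℤ_[p]) : ℚ_[p]) ∂μ) = 0 := by
  obtain ⟨i, hi⟩ := hx₀
  obtain ⟨z, hz, hzψ⟩ := hψ_nontriv
  have hp1 : (1 : ℝ) < p := by exact_mod_cast (Fact.out : p.Prime).one_lt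
  set D : ℤ_[p] := eval x₀ (pderiv i f) with hD
  have hD0 : D ≠ 0 := by
    intro h
    rw [h, norm_zero, zero_pow two_ne_zero] at hi
    exact absurd hi (not_lt.mpr (by positivity))
  have hbar : m ≤ 2 * mbar ∧ 2 * mbar ≤ m + 1 ∧ (Even m → 2 * mbar = m) := by
    rw [hmbar]
    split_ifs with h
    · obtain ⟨k, rfl⟩ := h; omega
    · rw [Nat.not_even_iff_odd] at h
      obtain ⟨k, rfl⟩ := h
      exact ⟨by omega, by omega, fun he => absurd he (by simp)⟩
  have hval : D.valuation + mbar + 1 ≤ m := by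
    rw [PadicInt.norm_eq_zpow_neg_valuation hD0, ← zpow_natCast, ← zpow_mul,
      zpow_lt_zpow_iff_right₀ hp1] at hi
    push_cast at hi
    rcases Nat.even_or_odd' m with ⟨k, hk | hk⟩
    · have := hbar.2.2 ⟨k, by omega⟩
      omega
    · omega
  have hDq : (D : ℚ_[p]) ≠ 0 := fun h => hD0 (PadicInt.ext h)
  -- The translation `t = z / ∂ᵢf(x₀)` is chosen so that `t * ∂ᵢf(x₀) = z`.
  have htn : ‖z / (D : ℚ_[p])‖ ≤ (p : ℝ) ^ (-(mbar : ℤ)) := by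
    rw [norm_div, ← PadicInt.norm_def, PadicInt.norm_eq_zpow_neg_valuation hD0,
      div_le_iff₀ (by positivity), ← zpow_add₀ (by positivity)]
    exact hz.trans (zpow_le_zpow_right₀ hp1.le (by omega))
  obtain ⟨t, ht⟩ : ∃ t : ℤ_[p], (t : ℚ_[p]) = z / (D : ℚ_[p]) :=
    ⟨⟨_, htn.trans (zpow_le_one_of_nonpos₀ hp1.le (by omega))⟩, rfl⟩
  rw [← ht, ← PadicInt.norm_def] at htn
  have htD : ((t * D : ℤ_[p]) : ℚ_[p]) = z := by
    rw [PadicInt.coe_mul, ht, div_mul_cancel₀ _ hDq]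
  have hdvd : ∀ (y : ℤ_[p]) (k : ℕ), ‖y‖ ≤ (p : ℝ) ^ (-(k : ℤ)) ↔ (p : ℤ_[p]) ^ k ∣ y := by
    intro y k
    rw [PadicInt.norm_le_pow_iff_mem_span_pow, Ideal.mem_span_singleton]
  set B : Set (Fin n → ℤ_[p]) := {x | ∀ i, ‖x i - x₀ i‖ ≤ (p : ℝ) ^ (-(mbar : ℤ))} with hB
  have hBm : MeasurableSet B := by
    rw [hB, Set.ofPred_forall]
    refine MeasurableSet.iInter fun j => ?_
    have hc : IsClosed {y : ℤ_[p] | ‖y - x₀ j‖ ≤ (p : ℝ) ^ (-(mbar : ℤ))} :=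
      isClosed_le (by fun_prop) continuous_const
    exact hc.measurableSet.preimage (measurable_pi_apply j)
  have hBt : ∀ x, x + Pi.single i t ∈ B ↔ x ∈ B := by
    intro x
    simp only [hB, Set.mem_ofPred_eq, hdvd]
    refine forall_congr' fun j => ?_
    have : (p : ℤ_[p]) ^ mbar ∣ (Pi.single i t : Fin n → ℤ_[p]) j := by
      by_cases hj : j = i
      · subst hj; simpa using (hdvd _ _).mp htn
      · simp [Pi.single_eq_of_ne hj]
    rw [Pi.add_apply, add_sub_right_comm, dvd_add_left this]
  have hshift : ∀ x ∈ B, ψ ((eval (x + Pi.single i t) f : ℤ_[p]) : ℚ_[p])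
      = ψ z * ψ ((eval x f : ℤ_[p]) : ℚ_[p]) := by
    intro x hx
    have h1 := dvd_sq_eval_add_single f i x x₀ t ((p : ℤ_[p]) ^ mbar)
      (fun j => (hdvd _ _).mp (hx j)) ((hdvd _ _).mp htn)
    rw [← pow_mul] at h1
    have h2 := (hdvd _ m).mpr ((pow_dvd_pow _ (by omega)).trans h1)
    have h3 := hψ_triv _ (by rw [PadicInt.norm_def] at h2; exact h2)
    have h4 : ((eval (x + Pi.single i t) f : ℤ_[p]) : ℚ_[p])
        = ((eval (x + Pi.single i t) f - (eval x f + t * D) : ℤ_[p]) : ℚ_[p])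
          + (z + ((eval x f : ℤ_[p]) : ℚ_[p])) := by
      rw [← htD]; push_cast; ring
    rw [h4, hψ_add, h3, one_mul, hψ_add]
  rw [← integral_indicator hBm]
  set G : (Fin n → ℤ_[p]) → ℂ := B.indicator fun x => ψ ((eval x f : ℤ_[p]) : ℚ_[p]) with hG
  have hGt : ∀ x, G (x + Pi.single i t) = ψ z * G x := by
    intro x
    by_cases hx : x ∈ B
    · rw [hG, Set.indicator_of_mem ((hBt x).mpr hx), Set.indicator_of_mem hx, hshift x hx]
    · rw [hG, Set.indicator_of_notMem (mt (hBt x).mp hx), Set.indicator_of_notMem hx, mul_zero]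
  have hI : ∫ x, G x ∂μ = ψ z * ∫ x, G x ∂μ := by
    rw [← integral_const_mul, ← integral_add_right_eq_self G (Pi.single i t)]
    simp only [hGt]
  have h0 : (1 - ψ z) * ∫ x, G x ∂μ = 0 := by
    linear_combination hI
  exact (mul_eq_zero.mp h0).resolve_left (sub_ne_zero.mpr (Ne.symm hzψ))
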